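/- Let α ∈ ℝ^{d+1} and β ∈ ℝ^d be strictly increasing, and suppose (M,N) ∈ ℝ²_{>0} is an appropriate choice for (α,β), meaning that for all (π,τ), the coefficients M α_i + N(β_{τ(i-1)} − β_{τ(i)}) are strictly increasing in i (with β_{τ(0)}=β_{τ(d+1)}=0). Let w ∈ ℝ^{d+1} satisfy: (1) w_{π^{-1}(1)} < ... < w_{π^{-1}(d+1)}, and (2) the differences u_{τ^{-1}(j)+1} − u_{τ^{-1}(j)} (where u_i = w_{π^{-1}(i)}) are strictly increasing in j. Then ⟨w, v_{π,τ}⟩ > ⟨w, v_{π',τ'}⟩ for all (π',τ') ≠ (π,τ). In particular, each v_{π,τ} is a vertex of the nested permutohedron Perm(α,β;M,N) = conv{v_{σ,ρ} : (σ,ρ) ∈ S_{d+1}×S_d}. -/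

import Mathlib

/-- The standard basis vector `e_j` of `ℝ^{d+1}`. -/
noncomputable def stdVec (d : ℕ) (j : Fin (d+1)) : Fin (d+1) → ℝ :=
  fun x => if x = j then 1 else 0

/-- `betaExt d β τ m` is `β_{τ(m)}` (1-indexed) for `1 ≤ m ≤ d`, with the convention
`β_{τ(0)} = β_{τ(d+1)} = 0`. -/
noncomputable def betaExt (d : ℕ) (β : Fin d → ℝ) (τ : Equiv.Perm (Fin d)) (m : ℕ) : ℝ :=
  if h : 1 ≤ m ∧ m ≤ d then β (τ ⟨m - 1, by omega⟩) else 0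

/-- The candidate vertex `v_{π,τ}` of the nested permutohedron `Perm(α,β;M,N)`. -/
noncomputable def nestedVertex (d : ℕ) (α : Fin (d+1) → ℝ) (β : Fin d → ℝ) (M N : ℝ)
    (π : Equiv.Perm (Fin (d+1))) (τ : Equiv.Perm (Fin d)) : Fin (d+1) → ℝ :=
  M • (∑ i, α i • stdVec d (π⁻¹ i)) +
    N • (∑ j : Fin d, β j •
      (stdVec d (π⁻¹ (Fin.succ (τ⁻¹ j))) - stdVec d (π⁻¹ (Fin.castSucc (τ⁻¹ j)))))

/-!
Pairing `w` with `v_{π,τ}` gives two expressions for the same number. Grouped by entries of `w`,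
it is `∑ i, c i * w (π⁻¹ i)`, where the coefficients `c`, obtained by Abel summation, do not depend
on `π` and increase because `(M, N)` is appropriate. Grouped by entries of `α` and `β`, its
`τ`-dependent part is `N` times the pairing of `β` with the first differences of `w ∘ π⁻¹`. Moving
from `(σ, ρ)` to `(π, ρ)` and then to `(π, τ)`, the strict rearrangement inequality applies to the
first expression and then to the second. Hence `⟨w, ·⟩` is larger at `v_{π,τ}` than on the convex
hull of the other points.
-/

section Rearrangement

variable {ι : Type*} [LinearOrder ι]

theorem monovary_comp_perm_iff_eq_one [WellFoundedLT ι] {R A : Type*} [Preorder R] [Preorder A]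
    {f : ι → R} {g : ι → A} (hf : StrictMono f) (hg : StrictMono g) (σ : Equiv.Perm ι) :
    Monovary f (g ∘ σ) ↔ σ = 1 := by
  refine ⟨fun h => ?_, fun h => h ▸ hf.monotone.monovary hg.monotone⟩
  have hsymm : Monotone σ.symm := monotone_iff_forall_lt.2 fun a b hab =>
    hf.le_iff_le.1 (h (by simpa using hg hab))
  have hiso : (hsymm.strictMono_of_injective σ.symm.injective).orderIsoOfSurjective _
      σ.symm.surjective = OrderIso.refl ι := Subsingleton.elim _ _
  rw [← inv_eq_one]
  exact Equiv.ext fun i => DFunLike.congr_fun hiso i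

theorem sum_smul_lt_sum_smul_of_strictMono_comp [Fintype ι] {κ R A : Type*}
    [Semiring R] [LinearOrder R] [IsStrictOrderedRing R] [ExistsAddOfLE R]
    [AddCommMonoid A] [LinearOrder A] [IsOrderedCancelAddMonoid A] [Module R A]
    [PosSMulStrictMono R A] {f : ι → R} {v : κ → A} {e e' : ι ≃ κ} (hf : StrictMono f)
    (hv : StrictMono (v ∘ e)) (hne : e' ≠ e) :
    ∑ i, f i • v (e' i) < ∑ i, f i • v (e i) := by
  have hmonovary : ¬ Monovary f ((v ∘ e) ∘ (e'.trans e.symm : Equiv.Perm ι)) := by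
    rw [monovary_comp_perm_iff_eq_one hf hv]
    contrapose! hne
    ext i
    simpa [Equiv.symm_apply_eq] using DFunLike.congr_fun hne i
  simpa using (hf.monotone.monovary hv.monotone).sum_smul_comp_perm_lt_sum_smul_iff.2 hmonovary

end Rearrangement

section BetaExt

variable {d : ℕ} (β : Fin d → ℝ) (τ : Equiv.Perm (Fin d))

theorem betaExt_zero : betaExt d β τ 0 = 0 := by
  simp [betaExt]

theorem betaExt_add_one (j : Fin d) : betaExt d β τ (j + 1) = β (τ j) := by
  simp [betaExt]

theorem betaExt_last : betaExt d β τ (d + 1) = 0 := by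
  simp [betaExt]

theorem sum_mul_sub_eq_sum_betaExt_sub_mul (u : Fin (d + 1) → ℝ) :
    ∑ j, β j * (u (τ⁻¹ j).succ - u (τ⁻¹ j).castSucc) =
      ∑ i : Fin (d + 1), (betaExt d β τ i - betaExt d β τ (i + 1)) * u i := by
  have hsucc : ∑ i : Fin (d + 1), betaExt d β τ i * u i = ∑ j, β (τ j) * u j.succ := by
    simp [Fin.sum_univ_succ, betaExt_zero, betaExt_add_one]
  have hcastSucc : ∑ i : Fin (d + 1), betaExt d β τ (i + 1) * u i =
      ∑ j, β (τ j) * u j.castSucc := by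
    simp [Fin.sum_univ_castSucc, betaExt_last, betaExt_add_one]
  calc ∑ j, β j * (u (τ⁻¹ j).succ - u (τ⁻¹ j).castSucc)
      = ∑ j, β (τ j) * (u j.succ - u j.castSucc) := by
        rw [← Equiv.sum_comp τ]
        simp
    _ = ∑ i : Fin (d + 1), (betaExt d β τ i - betaExt d β τ (i + 1)) * u i := by
        simp only [mul_sub, sub_mul, Finset.sum_sub_distrib, hsucc, hcastSucc]

end BetaExt

section NestedVertex

variable {d : ℕ} {α : Fin (d + 1) → ℝ} {β : Fin d → ℝ} {M N : ℝ}
  {π σ : Equiv.Perm (Fin (d + 1))} {τ ρ : Equiv.Perm (Fin d)} {w : Fin (d + 1) → ℝ}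

theorem dotProduct_stdVec (w : Fin (d + 1) → ℝ) (j : Fin (d + 1)) : w ⬝ᵥ stdVec d j = w j := by
  simp [dotProduct, stdVec]

variable (α β M N π τ w) in
theorem dotProduct_nestedVertex :
    w ⬝ᵥ nestedVertex d α β M N π τ =
      M * ∑ i, α i * w (π⁻¹ i) +
        N * ∑ j, β j * (w (π⁻¹ (τ⁻¹ j).succ) - w (π⁻¹ (τ⁻¹ j).castSucc)) := by
  simp only [nestedVertex, dotProduct_add, dotProduct_smul, dotProduct_sum, dotProduct_sub,
    dotProduct_stdVec, smul_eq_mul]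

variable (α β M N π τ w) in
theorem dotProduct_nestedVertex_eq_sum :
    w ⬝ᵥ nestedVertex d α β M N π τ =
      ∑ i : Fin (d + 1),
        (M * α i + N * (betaExt d β τ i - betaExt d β τ (i + 1))) * w (π⁻¹ i) := by
  rw [dotProduct_nestedVertex, sum_mul_sub_eq_sum_betaExt_sub_mul β τ fun i => w (π⁻¹ i)]
  simp only [Finset.mul_sum, ← Finset.sum_add_distrib, add_mul, mul_assoc]

theorem dotProduct_nestedVertex_lt_of_left_ne
    (hcoeff : StrictMono fun i : Fin (d + 1) =>
      M * α i + N * (betaExt d β τ i - betaExt d β τ (i + 1)))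
    (hw : StrictMono fun i => w (π⁻¹ i)) (hne : σ ≠ π) :
    w ⬝ᵥ nestedVertex d α β M N σ τ < w ⬝ᵥ nestedVertex d α β M N π τ := by
  simp only [dotProduct_nestedVertex_eq_sum]
  exact sum_smul_lt_sum_smul_of_strictMono_comp hcoeff hw (inv_injective.ne hne)

theorem dotProduct_nestedVertex_lt_of_right_ne (hβ : StrictMono β) (hN : 0 < N)
    (hw : StrictMono fun j => w (π⁻¹ (τ⁻¹ j).succ) - w (π⁻¹ (τ⁻¹ j).castSucc)) (hne : ρ ≠ τ) :
    w ⬝ᵥ nestedVertex d α β M N π ρ < w ⬝ᵥ nestedVertex d α β M N π τ := by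
  have hdiff : ∑ j, β j * (w (π⁻¹ (ρ⁻¹ j).succ) - w (π⁻¹ (ρ⁻¹ j).castSucc)) <
      ∑ j, β j * (w (π⁻¹ (τ⁻¹ j).succ) - w (π⁻¹ (τ⁻¹ j).castSucc)) :=
    sum_smul_lt_sum_smul_of_strictMono_comp
      (v := fun k : Fin d => w (π⁻¹ k.succ) - w (π⁻¹ k.castSucc)) hβ hw (inv_injective.ne hne)
  simp only [dotProduct_nestedVertex]
  gcongr

end NestedVertex

theorem nestedVertex_strict_max_general (d : ℕ) (α : Fin (d + 1) → ℝ) (β : Fin d → ℝ) (M N : ℝ)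
    (hβ : StrictMono β) (hN : 0 < N)
    (happ : ∀ τ : Equiv.Perm (Fin d), StrictMono fun i : Fin (d + 1) =>
      M * α i + N * (betaExt d β τ i - betaExt d β τ (i + 1)))
    (π : Equiv.Perm (Fin (d + 1))) (τ : Equiv.Perm (Fin d)) (w : Fin (d + 1) → ℝ)
    (hw1 : StrictMono fun i => w (π⁻¹ i))
    (hw2 : StrictMono fun j => w (π⁻¹ (τ⁻¹ j).succ) - w (π⁻¹ (τ⁻¹ j).castSucc)) :
    (∀ p : Equiv.Perm (Fin (d + 1)) × Equiv.Perm (Fin d), p ≠ (π, τ) →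
      w ⬝ᵥ nestedVertex d α β M N p.1 p.2 < w ⬝ᵥ nestedVertex d α β M N π τ) ∧
    nestedVertex d α β M N π τ ∉ convexHull ℝ
      {y | ∃ p : Equiv.Perm (Fin (d + 1)) × Equiv.Perm (Fin d),
        p ≠ (π, τ) ∧ y = nestedVertex d α β M N p.1 p.2} := by
  have hlt (p : Equiv.Perm (Fin (d + 1)) × Equiv.Perm (Fin d)) (hp : p ≠ (π, τ)) :
      w ⬝ᵥ nestedVertex d α β M N p.1 p.2 < w ⬝ᵥ nestedVertex d α β M N π τ := by
    obtain ⟨σ, ρ⟩ := p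
    have hleft (hσ : σ ≠ π) := dotProduct_nestedVertex_lt_of_left_ne (happ ρ) hw1 hσ
    have hright (hρ : ρ ≠ τ) :=
      dotProduct_nestedVertex_lt_of_right_ne (α := α) (M := M) hβ hN hw2 hρ
    rcases eq_or_ne σ π with rfl | hσ
    · exact hright fun hρ => hp (by rw [hρ])
    rcases eq_or_ne ρ τ with rfl | hρ
    · exact hleft hσ
    · exact (hleft hσ).trans (hright hρ)
  refine ⟨hlt, fun hmem => ?_⟩
  obtain ⟨_, ⟨p, hp, rfl⟩, hle⟩ := ((dotProductBilin ℝ ℝ w).convexOn convex_univ)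
    |>.exists_ge_of_mem_convexHull (Set.subset_univ _) hmem
  exact (hlt p hp).not_ge hle

/-- Proposition `prop:fanofusual2` (key step): if `(M,N)` is an appropriate choice for the
strictly increasing pair `(α,β)`, and `w` lies in the open cone `C(π,τ)` — i.e. the
coordinates `w_{π⁻¹(1)} < ⋯ < w_{π⁻¹(d+1)}` increase and their first differences, read in the
order prescribed by `τ`, increase — then `⟨w, v_{π,τ}⟩ > ⟨w, v_{π',τ'}⟩` for every
`(π',τ') ≠ (π,τ)`; in particular `v_{π,τ}` is a vertex of
`Perm(α,β;M,N) = conv{v_{σ,ρ}}`, not lying in the convex hull of the other points. -/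
theorem nestedVertex_strict_max (d : ℕ) (α : Fin (d+1) → ℝ) (β : Fin d → ℝ) (M N : ℝ)
    (hα : StrictMono α) (hβ : StrictMono β) (hM : 0 < M) (hN : 0 < N)
    (happ : ∀ τ : Equiv.Perm (Fin d), StrictMono fun i : Fin (d+1) =>
      M * α i + N * (betaExt d β τ (i : ℕ) - betaExt d β τ ((i : ℕ) + 1)))
    (π : Equiv.Perm (Fin (d+1))) (τ : Equiv.Perm (Fin d)) (w : Fin (d+1) → ℝ)
    (hw1 : StrictMono fun i => w (π⁻¹ i))
    (hw2 : StrictMono fun j : Fin d =>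
      w (π⁻¹ (Fin.succ (τ⁻¹ j))) - w (π⁻¹ (Fin.castSucc (τ⁻¹ j)))) :
    (∀ p : Equiv.Perm (Fin (d+1)) × Equiv.Perm (Fin d), p ≠ (π, τ) →
      (∑ x, w x * nestedVertex d α β M N p.1 p.2 x)
        < ∑ x, w x * nestedVertex d α β M N π τ x) ∧
    nestedVertex d α β M N π τ ∉ convexHull ℝ
      {y : Fin (d+1) → ℝ | ∃ p : Equiv.Perm (Fin (d+1)) × Equiv.Perm (Fin d),
        p ≠ (π, τ) ∧ y = nestedVertex d α β M N p.1 p.2} :=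
  nestedVertex_strict_max_general d α β M N hβ hN happ π τ w hw1 hw2
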